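/- Let A be a complete filtered algebra over a field K of characteristic zero, R : A → A a K-linear map preserving the filtration, R̃ := id_A − R, and let χ : A₁ → A₁ be the unique map with (χ − id)(Aₙ) ⊆ A₂ₙ for all n ≥ 1 and exp(R(χ(x)))·exp(R̃(χ(x))) = exp(x) for all x ∈ A₁. Then χ is a bijection of A₁ onto itself, and its inverse is given by χ⁻¹(x) = log(exp(R(x))·exp(R̃(x))) for all x ∈ A₁. -/

import Mathlib

/-!
The map `S x = exp (R x) * exp (x - R x)` from `A₁` to `1 + A₁` is, like `exp`, tangent to the
identity: if `x - y ∈ Aₙ` then `S x - S y` and `x - y` agree modulo `Aₙ₊₁`. Hence two elements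
of `A₁` with the same image differ by an element of every `Aₙ`, and `S` and `exp` are injective.
Since `S ∘ χ = exp` and `exp ∘ log = id`, the map `log ∘ S` is a two-sided inverse of `χ`.
-/

open scoped Classical

/-- A complete filtered algebra over a field `K` of characteristic zero: an associative unital
`K`-algebra `A` with a decreasing filtration `A = F 0 ⊇ F 1 ⊇ ⋯` by (two-sided, here
`K`-submodules closed under multiplication in the filtered sense) ideals, which is separated
and complete: every series `Σ aₙ` with `aₙ ∈ F n` converges (has a limit in the filtration
topology). -/
structure CompleteFilteredAlgebra (K A : Type*) [Field K] [CharZero K] [Ring A] [Algebra K A] where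
  F : ℕ → Submodule K A
  F_zero : F 0 = ⊤
  F_succ_le : ∀ n : ℕ, F (n + 1) ≤ F n
  F_mul : ∀ m n : ℕ, ∀ x ∈ F m, ∀ y ∈ F n, x * y ∈ F (m + n)
  F_sep : ∀ x : A, (∀ n : ℕ, x ∈ F n) → x = 0
  F_complete : ∀ a : ℕ → A, (∀ n : ℕ, a n ∈ F n) →
    ∃ s : A, ∀ N : ℕ, s - ∑ n ∈ Finset.range N, a n ∈ F N

namespace CompleteFilteredAlgebra

variable {K A : Type*} [Field K] [CharZero K] [Ring A] [Algebra K A]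

/-- The exponential `exp x = Σ_{n≥0} xⁿ/n!`, defined (as the limit of its partial sums) for
every `x ∈ F 1`; junk value `0` elsewhere. -/
noncomputable def exp (FA : CompleteFilteredAlgebra K A) (x : A) : A :=
  if h : ∀ n : ℕ, ((n.factorial : K)⁻¹ • x ^ n) ∈ FA.F n then
    Classical.choose (FA.F_complete _ h)
  else 0

/-- The logarithm `log (1 + y) = Σ_{n≥1} (-1)^(n-1) yⁿ/n`, defined (as the limit of its partial
sums) whenever the argument lies in `1 + F 1`; junk value `0` elsewhere. (The `n = 0` term of
the defining sequence is `0` since `1/0 = 0` in `K`.) -/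
noncomputable def log (FA : CompleteFilteredAlgebra K A) (y : A) : A :=
  if h : ∀ n : ℕ, ((((-1 : K) ^ (n - 1)) / (n : K)) • (y - 1) ^ n) ∈ FA.F n then
    Classical.choose (FA.F_complete _ h)
  else 0

end CompleteFilteredAlgebra

open scoped PowerSeries Polynomial

section FormalPowerSeries

open PowerSeries

variable {B : Type*} [CommRing B]

lemma constantCoeff_subst_of_constantCoeff_eq_zero (f : B⟦X⟧) {g : B⟦X⟧}
    (hg : g.constantCoeff = 0) : constantCoeff (f.subst g) = f.constantCoeff := by
  rw [← coeff_zero_eq_constantCoeff_apply,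
    coeff_subst' (.of_constantCoeff_zero' hg), finsum_eq_single _ 0]
  · simp
  · intro n hn
    simp [hg, hn]

/-- Since `log' = 1 / (1 + X)`, the product of the left-hand side and `log'` has derivative zero. -/
lemma powerSeries_exp_subst_log [Algebra ℚ B] :
    (exp B).subst (log B) = 1 + X := by
  set E : B⟦X⟧ := (exp B).subst (log B)
  set L : B⟦X⟧ := d⁄dX B (log B)
  have mul_L : (1 + X) * L = 1 := by
    ext n
    cases n <;> simp [L, add_mul, coeff_one, deriv_log, pow_succ,
      coeff_succ_X_mul]
  have deriv_E : d⁄dX B E = E * L := by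
    rw [derivative_subst HasSubst.log, derivative_exp]
  have deriv_L : d⁄dX B L = -L ^ 2 := by
    have h : (1 + X) * d⁄dX B L + L = 0 := by
      simpa using congrArg (d⁄dX B) mul_L
    linear_combination L * h - d⁄dX B L * mul_L
  have E_mul_L : E * L = 1 := by
    have : IsAddTorsionFree B := .of_module_rat B
    apply derivative.ext
    · simp only [Derivation.leibniz, deriv_E, deriv_L, smul_eq_mul, Derivation.map_one_eq_zero]
      ring
    · have const_E : constantCoeff E = 1 := by
        rw [constantCoeff_subst_of_constantCoeff_eq_zero _ constantCoeff_log,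
          constantCoeff_exp]
      have const_L : L.constantCoeff = 1 := by
        simp [L, deriv_log, ← coeff_zero_eq_constantCoeff_apply]
      simp [const_E, const_L]
  calc E = (1 + X) * L * E := by rw [mul_L, one_mul]
    _ = E * L * (1 + X) := by ring
    _ = 1 + X := by rw [E_mul_L, one_mul]

lemma X_pow_dvd_coe_iff {n : ℕ} {p : B[X]} :
    X ^ n ∣ (p : B⟦X⟧) ↔ Polynomial.X ^ n ∣ p := by
  simp only [X_pow_dvd_iff, Polynomial.X_pow_dvd_iff, Polynomial.coeff_coe]

lemma X_pow_dvd_sub_trunc (n : ℕ) (f : B⟦X⟧) :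
    X ^ n ∣ f - (f.trunc n : B⟦X⟧) :=
  ⟨_, sub_eq_of_eq_add (f.eq_X_pow_mul_shift_add_trunc n)⟩

lemma X_pow_dvd_comp_trunc_sub_trunc_subst (n : ℕ) (f : B⟦X⟧) {g : B⟦X⟧}
    (hg : g.constantCoeff = 0) :
    Polynomial.X ^ n ∣ (f.trunc n).comp (g.trunc n) - trunc n (f.subst g) := by
  have hsubst : HasSubst g := .of_constantCoeff_zero' hg
  have inner : X ^ n ∣ (f.trunc n).aeval g - (f.trunc n).aeval (g.trunc n : B⟦X⟧) := by
    refine (X_pow_dvd_sub_trunc n g).trans ?_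
    simpa only [Polynomial.aeval_def, ← Polynomial.eval_map] using Polynomial.sub_dvd_eval_sub _ _ _
  have outer : X ^ n ∣ f.subst g - (f.trunc n).aeval g := by
    obtain ⟨h, hh⟩ := X_pow_dvd_sub_trunc n f
    rw [← subst_coe hsubst, ← subst_sub hsubst, hh,
      subst_mul hsubst, subst_pow hsubst, subst_X hsubst]
    exact (pow_dvd_pow_of_dvd (X_dvd_iff.mpr hg) n).mul_right _
  have coe_comp : (((f.trunc n).comp (g.trunc n) : B[X]) : B⟦X⟧)
      = (f.trunc n).aeval (g.trunc n : B⟦X⟧) := by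
    simpa [Polynomial.comp_eq_aeval] using
      (Polynomial.aeval_algHom_apply (Polynomial.coeToPowerSeries.algHom B) (g.trunc n)
        (f.trunc n)).symm
  rw [← X_pow_dvd_coe_iff, Polynomial.coe_sub, coe_comp]
  convert (X_pow_dvd_sub_trunc n (f.subst g)).sub (outer.add inner) using 1
  ring

end FormalPowerSeries

namespace CompleteFilteredAlgebra

variable {K A : Type*} [Field K] [CharZero K] [Ring A] [Algebra K A]
variable (FA : CompleteFilteredAlgebra K A)

section Filtration

lemma F_antitone : Antitone FA.F := antitone_nat_of_succ_le FA.F_succ_le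

lemma mem_F_zero (x : A) : x ∈ FA.F 0 := FA.F_zero ▸ Submodule.mem_top

lemma mul_mem_F_left {n : ℕ} (a : A) {x : A} (hx : x ∈ FA.F n) : a * x ∈ FA.F n := by
  simpa only [zero_add] using FA.F_mul 0 n a (FA.mem_F_zero a) x hx

lemma mul_mem_F_right {n : ℕ} {x : A} (hx : x ∈ FA.F n) (a : A) : x * a ∈ FA.F n := by
  simpa only [add_zero] using FA.F_mul n 0 x hx a (FA.mem_F_zero a)

lemma pow_mem_F {x : A} (hx : x ∈ FA.F 1) (n : ℕ) : x ^ n ∈ FA.F n := by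
  induction n with
  | zero => exact FA.mem_F_zero _
  | succ n ih => exact pow_succ x n ▸ FA.F_mul n 1 _ ih _ hx

lemma mul_sub_one_mem {u v : A} (hu : u - 1 ∈ FA.F 1) (hv : v - 1 ∈ FA.F 1) :
    u * v - 1 ∈ FA.F 1 := by
  convert add_mem (FA.mul_mem_F_right hu v) hv using 1
  noncomm_ring

lemma pow_succ_sub_pow_succ_mem {a b : A} (ha : a ∈ FA.F 1) (hb : b ∈ FA.F 1) {n : ℕ}
    (hab : a - b ∈ FA.F n) (k : ℕ) : a ^ (k + 1) - b ^ (k + 1) ∈ FA.F (n + k) := by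
  induction k with
  | zero => simpa only [zero_add, add_zero, pow_one] using hab
  | succ k ih =>
    have telescope : a ^ (k + 2) - b ^ (k + 2)
        = a ^ (k + 1) * (a - b) + (a ^ (k + 1) - b ^ (k + 1)) * b := by
      rw [pow_succ a (k + 1), pow_succ b (k + 1)]
      noncomm_ring
    rw [telescope]
    refine add_mem ?_ (FA.F_mul _ _ _ ih _ hb)
    rw [add_comm n]
    exact FA.F_mul _ _ _ (FA.pow_mem_F ha (k + 1)) _ hab

lemma aeval_mem_of_X_pow_dvd {x : A} (hx : x ∈ FA.F 1) {n : ℕ} {p : K[X]}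
    (hp : Polynomial.X ^ n ∣ p) : p.aeval x ∈ FA.F n := by
  obtain ⟨q, rfl⟩ := hp
  rw [map_mul, Polynomial.aeval_X_pow]
  exact FA.mul_mem_F_right (FA.pow_mem_F hx n) _

lemma aeval_sub_aeval_sub_smul_mem {a b : A} (ha : a ∈ FA.F 1) (hb : b ∈ FA.F 1) {n : ℕ}
    (hab : a - b ∈ FA.F n) (p : K[X]) :
    p.aeval a - p.aeval b - p.coeff 1 • (a - b) ∈ FA.F (n + 1) := by
  induction p using Polynomial.induction_on' with
  | add p q hp hq =>
    convert add_mem hp hq using 1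
    simp only [map_add, Polynomial.coeff_add, add_smul]
    abel
  | monomial k c =>
    match k with
    | 0 => simp
    | 1 => simp [Algebra.smul_def, mul_sub]
    | k + 2 =>
      have h : c • (a ^ (k + 2) - b ^ (k + 2)) ∈ FA.F (n + 1) := (FA.F (n + 1)).smul_mem c <|
        FA.F_antitone (by lia) (FA.pow_succ_sub_pow_succ_mem ha hb hab (k + 1))
      simpa [Polynomial.aeval_monomial, Polynomial.coeff_monomial, mul_sub, Algebra.smul_def]
        using h

lemma aeval_sub_aeval_mem {a b : A} (ha : a ∈ FA.F 1) (hb : b ∈ FA.F 1) {n : ℕ}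
    (hab : a - b ∈ FA.F n) (p : K[X]) : p.aeval a - p.aeval b ∈ FA.F n := by
  have h := FA.F_succ_le n (FA.aeval_sub_aeval_sub_smul_mem ha hb hab p)
  simpa only [sub_add_cancel] using add_mem h ((FA.F n).smul_mem (p.coeff 1) hab)

end Filtration

section PowerSeriesEvaluation

/-- `FA.HasValue f x s` says that the power series `f`, evaluated at `x`, converges to `s` in the
filtration topology, at the rate which is automatic for `x ∈ A₁`. -/
def HasValue (f : K⟦X⟧) (x s : A) : Prop :=
  ∀ n : ℕ, s - (f.trunc n).aeval x ∈ FA.F n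

variable {FA}

lemma hasValue_iff_sum {f : K⟦X⟧} {x s : A} :
    FA.HasValue f x s ↔ ∀ n, s - ∑ i ∈ Finset.range n, f.coeff i • x ^ i ∈ FA.F n := by
  simp only [HasValue, Polynomial.aeval_def, PowerSeries.eval₂_trunc_eq_sum_range,
    Algebra.smul_def]

lemma HasValue.unique {f : K⟦X⟧} {x s t : A} (hs : FA.HasValue f x s) (ht : FA.HasValue f x t) :
    s = t := by
  refine sub_eq_zero.mp (FA.F_sep _ fun n ↦ ?_)
  simpa only [sub_sub_sub_cancel_right] using sub_mem (hs n) (ht n)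

lemma HasValue.sub_algebraMap_mem {f : K⟦X⟧} {x s : A} (hs : FA.HasValue f x s) :
    s - algebraMap K A f.constantCoeff ∈ FA.F 1 := by
  simpa [Algebra.smul_def] using hasValue_iff_sum.mp hs 1

lemma hasValue_coe {x : A} (hx : x ∈ FA.F 1) (p : K[X]) : FA.HasValue p x (p.aeval x) := by
  intro n
  rw [← map_sub]
  refine FA.aeval_mem_of_X_pow_dvd hx (X_pow_dvd_coe_iff.mp ?_)
  simpa only [Polynomial.coe_sub] using X_pow_dvd_sub_trunc n (p : K⟦X⟧)

lemma HasValue.subst {f g : K⟦X⟧} (hg : g.constantCoeff = 0) {x t s : A} (hx : x ∈ FA.F 1)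
    (ht : FA.HasValue g x t) (hs : FA.HasValue f t s) : FA.HasValue (f.subst g) x s := by
  intro n
  set u := (g.trunc n).aeval x with hu
  have t_mem : t ∈ FA.F 1 := by simpa [hg] using ht.sub_algebraMap_mem
  have u_mem : u ∈ FA.F 1 := by
    refine FA.aeval_mem_of_X_pow_dvd hx ?_
    rw [pow_one, Polynomial.X_dvd_iff, PowerSeries.coeff_trunc]
    simp [hg]
  have inner : (f.trunc n).aeval t - (f.trunc n).aeval u ∈ FA.F n :=
    FA.aeval_sub_aeval_mem t_mem u_mem (ht n) _
  have formal : (f.trunc n).aeval u - (PowerSeries.trunc n (f.subst g)).aeval x ∈ FA.F n := by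
    rw [hu, ← Polynomial.aeval_comp, ← map_sub]
    exact FA.aeval_mem_of_X_pow_dvd hx (X_pow_dvd_comp_trunc_sub_trunc_subst n f hg)
  simpa only [sub_add_sub_cancel] using add_mem (add_mem (hs n) inner) formal

lemma HasValue.sub_sub_smul_mem {f : K⟦X⟧} {a b s t : A} (ha : a ∈ FA.F 1) (hb : b ∈ FA.F 1)
    (hs : FA.HasValue f a s) (ht : FA.HasValue f b t) {n : ℕ} (hab : a - b ∈ FA.F n) :
    s - t - f.coeff 1 • (a - b) ∈ FA.F (n + 1) := by
  have tails := FA.F_succ_le (n + 1) (sub_mem (hs (n + 2)) (ht (n + 2)))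
  have poly := FA.aeval_sub_aeval_sub_smul_mem ha hb hab (f.trunc (n + 2))
  rw [PowerSeries.coeff_trunc, if_pos (by lia)] at poly
  convert add_mem tails poly using 1
  abel

end PowerSeriesEvaluation

section ExpLog

lemma hasValue_exp {x : A} (hx : x ∈ FA.F 1) : FA.HasValue (PowerSeries.exp K) x (FA.exp x) := by
  have summable (n : ℕ) : (n.factorial : K)⁻¹ • x ^ n ∈ FA.F n :=
    (FA.F n).smul_mem _ (FA.pow_mem_F hx n)
  rw [exp, dif_pos summable, hasValue_iff_sum]
  simpa using Classical.choose_spec (FA.F_complete _ summable)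

lemma hasValue_log {y : A} (hy : y - 1 ∈ FA.F 1) :
    FA.HasValue (PowerSeries.log K) (y - 1) (FA.log y) := by
  have summable (n : ℕ) : ((-1 : K) ^ (n - 1) / (n : K)) • (y - 1) ^ n ∈ FA.F n :=
    (FA.F n).smul_mem _ (FA.pow_mem_F hy n)
  have coeff_log (n : ℕ) : (PowerSeries.log K).coeff n = (-1 : K) ^ (n - 1) / (n : K) := by
    cases n <;> simp [pow_succ]
  rw [log, dif_pos summable, hasValue_iff_sum]
  simpa only [coeff_log] using Classical.choose_spec (FA.F_complete _ summable)

lemma exp_sub_one_mem {x : A} (hx : x ∈ FA.F 1) : FA.exp x - 1 ∈ FA.F 1 := by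
  simpa using (FA.hasValue_exp hx).sub_algebraMap_mem

lemma log_mem {y : A} (hy : y - 1 ∈ FA.F 1) : FA.log y ∈ FA.F 1 := by
  simpa using (FA.hasValue_log hy).sub_algebraMap_mem

lemma exp_log {y : A} (hy : y - 1 ∈ FA.F 1) : FA.exp (FA.log y) = y := by
  have h := HasValue.subst PowerSeries.constantCoeff_log hy (FA.hasValue_log hy)
    (FA.hasValue_exp (FA.log_mem hy))
  rw [powerSeries_exp_subst_log] at h
  have value := hasValue_coe hy (1 + Polynomial.X)
  rw [Polynomial.coe_add, Polynomial.coe_one, Polynomial.coe_X, map_add, map_one,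
    Polynomial.aeval_X, add_sub_cancel] at value
  exact h.unique value

end ExpLog

section TangentToId

/-- A map `A → A` is tangent to the identity on `A₁` if it preserves differences of elements of
`A₁` to leading order in the filtration. This makes it injective on `A₁`. -/
def IsTangentToId (f : A → A) : Prop :=
  ∀ n : ℕ, ∀ x ∈ FA.F 1, ∀ y ∈ FA.F 1, x - y ∈ FA.F n → f x - f y - (x - y) ∈ FA.F (n + 1)

/-- A map `A → A` is nonexpansive on `A₁` for the distance defined by the filtration. For additive
maps this holds as soon as the filtration is preserved. -/
def IsNonexpansive (R : A → A) : Prop :=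
  ∀ n : ℕ, ∀ x ∈ FA.F 1, ∀ y ∈ FA.F 1, x - y ∈ FA.F n → R x - R y ∈ FA.F n

variable {FA}

lemma IsTangentToId.injOn {f : A → A} (hf : FA.IsTangentToId f) : Set.InjOn f (FA.F 1) := by
  intro x hx y hy hxy
  refine sub_eq_zero.mp (FA.F_sep _ fun n ↦ ?_)
  induction n with
  | zero => exact FA.mem_F_zero _
  | succ n ih =>
    have h := hf n x hx y hy ih
    rwa [hxy, sub_self, zero_sub, neg_mem_iff] at h

lemma IsNonexpansive.id_sub {R : A → A} (hR : FA.IsNonexpansive R) :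
    FA.IsNonexpansive fun x ↦ x - R x := by
  intro n x hx y hy hxy
  simpa only [sub_sub_sub_comm] using sub_mem hxy (hR n x hx y hy hxy)

variable (FA)

lemma isTangentToId_exp : FA.IsTangentToId FA.exp := by
  intro n x hx y hy hxy
  simpa using (FA.hasValue_exp hx).sub_sub_smul_mem hx hy (FA.hasValue_exp hy) hxy

lemma mul_sub_mul_sub_add_mem {u u' v v' d e : A} {n : ℕ} (hu : u - 1 ∈ FA.F 1)
    (hv' : v' - 1 ∈ FA.F 1) (hd : d ∈ FA.F n) (he : e ∈ FA.F n)
    (huu' : u - u' - d ∈ FA.F (n + 1)) (hvv' : v - v' - e ∈ FA.F (n + 1)) :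
    u * v - u' * v' - (d + e) ∈ FA.F (n + 1) := by
  have expand : u * v - u' * v' - (d + e)
      = u * (v - v' - e) + (u - u' - d) * v' + d * (v' - 1) + (u - 1) * e := by
    noncomm_ring
  rw [expand]
  refine add_mem (add_mem (add_mem (FA.mul_mem_F_left u hvv') (FA.mul_mem_F_right huu' v'))
    (FA.F_mul n 1 _ hd _ hv')) ?_
  rw [add_comm n]
  exact FA.F_mul 1 n _ hu _ he

lemma isTangentToId_exp_mul_exp {R : A → A} (hmaps : Set.MapsTo R (FA.F 1) (FA.F 1))
    (hR : FA.IsNonexpansive R) :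
    FA.IsTangentToId fun x ↦ FA.exp (R x) * FA.exp (x - R x) := by
  intro n x hx y hy hxy
  have hTx : x - R x ∈ FA.F 1 := sub_mem hx (hmaps hx)
  have hTy : y - R y ∈ FA.F 1 := sub_mem hy (hmaps hy)
  have hRxy := hR n x hx y hy hxy
  have hTxy : x - R x - (y - R y) ∈ FA.F n := hR.id_sub n x hx y hy hxy
  have sum_diffs : R x - R y + (x - R x - (y - R y)) = x - y := by abel
  have product := FA.mul_sub_mul_sub_add_mem (FA.exp_sub_one_mem (hmaps hx))
    (FA.exp_sub_one_mem hTy) hRxy hTxy (FA.isTangentToId_exp n _ (hmaps hx) _ (hmaps hy) hRxy)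
    (FA.isTangentToId_exp n _ hTx _ hTy hTxy)
  rwa [sum_diffs] at product

lemma log_exp {x : A} (hx : x ∈ FA.F 1) : FA.log (FA.exp x) = x :=
  FA.isTangentToId_exp.injOn (FA.log_mem (FA.exp_sub_one_mem hx)) hx
    (FA.exp_log (FA.exp_sub_one_mem hx))

lemma exp_mul_exp_sub_one_mem {R : A → A} (hmaps : Set.MapsTo R (FA.F 1) (FA.F 1)) {x : A}
    (hx : x ∈ FA.F 1) : FA.exp (R x) * FA.exp (x - R x) - 1 ∈ FA.F 1 :=
  FA.mul_sub_one_mem (FA.exp_sub_one_mem (hmaps hx))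
    (FA.exp_sub_one_mem (sub_mem hx (hmaps hx)))

end TangentToId

end CompleteFilteredAlgebra

theorem bch_recursion_inverse_general {K A : Type*} [Field K] [CharZero K]
    [Ring A] [Algebra K A] (FA : CompleteFilteredAlgebra K A) (R : A → A)
    (hmaps : Set.MapsTo R (FA.F 1) (FA.F 1)) (hR : FA.IsNonexpansive R)
    (χ : FA.F 1 → FA.F 1)
    (hfact : ∀ x : FA.F 1,
      FA.exp (R (χ x)) * FA.exp ((χ x : A) - R (χ x)) = FA.exp (x : A)) :
    Function.Bijective χ ∧
    ∃ ψ : FA.F 1 → FA.F 1, Function.LeftInverse ψ χ ∧ Function.RightInverse ψ χ ∧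
      ∀ x : FA.F 1, (ψ x : A) = FA.log (FA.exp (R x) * FA.exp ((x : A) - R x)) := by
  have hS (x : FA.F 1) : FA.exp (R x) * FA.exp (x - R x) - 1 ∈ FA.F 1 :=
    FA.exp_mul_exp_sub_one_mem hmaps x.2
  let ψ (x : FA.F 1) : FA.F 1 := ⟨FA.log (FA.exp (R x) * FA.exp (x - R x)), FA.log_mem (hS x)⟩
  have left_inv : Function.LeftInverse ψ χ := fun x ↦ Subtype.ext <| by
    simp only [ψ, hfact, FA.log_exp x.2]
  have right_inv : Function.RightInverse ψ χ := fun x ↦ Subtype.ext <|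
    (FA.isTangentToId_exp_mul_exp hmaps hR).injOn (χ (ψ x)).2 x.2 <| by
      simp only [hfact, ψ, FA.exp_log (hS x)]
  exact ⟨⟨left_inv.injective, right_inv.surjective⟩, ψ, left_inv, right_inv, fun _ ↦ rfl⟩

/-- For a complete filtered algebra `A` over a field `K` of characteristic zero,
a filtration-preserving `K`-linear map `R`, `R̃ := id - R`, and the (unique) map `χ : A₁ → A₁`
with `(χ - id)(Aₙ) ⊆ A₂ₙ` and `exp(R(χ x)) * exp(R̃(χ x)) = exp x`, the map `χ` is a bijection
of `A₁` onto itself, with inverse `χ⁻¹(x) = log(exp(R x) * exp(R̃ x))`. -/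
theorem bch_recursion_inverse {K A : Type*} [Field K] [CharZero K]
    [Ring A] [Algebra K A] (FA : CompleteFilteredAlgebra K A) (R : A →ₗ[K] A)
    (hR : ∀ n : ℕ, ∀ x ∈ FA.F n, R x ∈ FA.F n)
    (χ : FA.F 1 → FA.F 1)
    (hdev : ∀ n : ℕ, 1 ≤ n → ∀ x : FA.F 1, (x : A) ∈ FA.F n →
      ((χ x : A) - (x : A)) ∈ FA.F (2 * n))
    (hfact : ∀ x : FA.F 1,
      FA.exp (R (χ x)) * FA.exp ((χ x : A) - R (χ x)) = FA.exp (x : A)) :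
    Function.Bijective χ ∧
    ∃ ψ : FA.F 1 → FA.F 1, Function.LeftInverse ψ χ ∧ Function.RightInverse ψ χ ∧
      ∀ x : FA.F 1, (ψ x : A) = FA.log (FA.exp (R x) * FA.exp ((x : A) - R x)) := by
  have hmaps : Set.MapsTo R (FA.F 1) (FA.F 1) := hR 1
  have hnonexp : FA.IsNonexpansive R := fun n x _ y _ hxy ↦ map_sub R x y ▸ hR n _ hxy
  exact bch_recursion_inverse_general FA R hmaps hnonexp χ hfact
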